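/- arXiv:1610.02877 — 2 statements merged into one kernel-verified Lean document; each statement's English description precedes it below -/
import Mathlib

section
/- (Existence and uniqueness of the optimal entry threshold.) Let w : (0,∞) → (0,∞) be continuous with z ↦ w(z) integrable on (0,x) for every x > 0 and ∫₀^∞ w(z)dz = ∞. Let h : (0,∞) → ℝ be continuous and strictly increasing with lim_{x→0+} h(x) = 0, and let c > 0 be a constant with lim_{x→∞} h(x) > c (the limit possibly being +∞). Then there exists a unique x* > 0 such that ∫₀^{x*} (h(z) − c)·w(z)dz = 0; moreover h(x*) > c. -/
open Set Real MeasureTheory Filter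

/-- (Existence and uniqueness of the optimal entry threshold.)
Let `w > 0` be continuous on `(0,∞)`, locally integrable near `0`, with
`∫₀^∞ w = ∞`. Let `h` be continuous and strictly increasing on `(0,∞)` with
`h(0+) = 0`, and let `c > 0` with `lim_{x→∞} h(x) > c` (possibly `+∞`). Then there is a
unique `x* > 0` with `∫₀^{x*} (h(z) − c)·w(z) dz = 0`, and moreover `h(x*) > c`. -/
theorem optimal_threshold_exists_unique
    (w h : ℝ → ℝ) (c : ℝ)
    (hwc : ContinuousOn w (Ioi 0))
    (hwpos : ∀ x ∈ Ioi (0 : ℝ), 0 < w x)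
    (hwint : ∀ x ∈ Ioi (0 : ℝ), IntegrableOn w (Ioo 0 x))
    (hwinf : ∫⁻ z in Ioi (0 : ℝ), ENNReal.ofReal (w z) = ⊤)
    (hhc : ContinuousOn h (Ioi 0))
    (hhmono : StrictMonoOn h (Ioi 0))
    (hh0 : Tendsto h (nhdsWithin 0 (Ioi 0)) (nhds 0))
    (hc : 0 < c)
    (hhlim : Tendsto h atTop atTop ∨ ∃ L : ℝ, Tendsto h atTop (nhds L) ∧ c < L) :
    ∃ xs : ℝ, (0 < xs ∧ (∫ z in Ioo (0 : ℝ) xs, (h z - c) * w z) = 0 ∧ c < h xs) ∧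
      ∀ y : ℝ, 0 < y → (∫ z in Ioo (0 : ℝ) y, (h z - c) * w z) = 0 → y = xs := by
  have hhnn : ∀ x ∈ Ioi (0 : ℝ), 0 ≤ h x := by
    intro x hx
    refine le_of_tendsto hh0 ?_
    filter_upwards [Ioo_mem_nhdsGT (mem_Ioi.1 hx)] with y hy
    exact (hhmono hy.1 hx hy.2).le
  have hfint : ∀ x ∈ Ioi (0 : ℝ), IntegrableOn (fun z => (h z - c) * w z) (Ioo 0 x) := by
    intro x hx
    refine Integrable.bdd_mul (c := h x + c) (hwint x hx) ?_ ?_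
    · exact ((hhc.mono Ioo_subset_Ioi_self).sub continuousOn_const).aestronglyMeasurable
        measurableSet_Ioo
    · filter_upwards [ae_restrict_mem measurableSet_Ioo] with z hz
      have h1 := hhnn z hz.1
      have h2 := hhmono hz.1 hx hz.2
      rw [Real.norm_eq_abs, abs_le]
      constructor <;> linarith
  have hfI : ∀ x y : ℝ, 0 ≤ x → x ≤ y →
      IntervalIntegrable (fun z => (h z - c) * w z) volume x y := by
    intro x y hx hxy
    rw [intervalIntegrable_iff_integrableOn_Ioo_of_le hxy]
    rcases hxy.eq_or_lt with rfl | hlt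
    · simp
    · exact (hfint y (lt_of_le_of_lt hx hlt)).mono_set (Ioo_subset_Ioo_left hx)
  have hwI : ∀ x y : ℝ, 0 ≤ x → x ≤ y → IntervalIntegrable w volume x y := by
    intro x y hx hxy
    rw [intervalIntegrable_iff_integrableOn_Ioo_of_le hxy]
    rcases hxy.eq_or_lt with rfl | hlt
    · simp
    · exact (hwint y (lt_of_le_of_lt hx hlt)).mono_set (Ioo_subset_Ioo_left hx)
  have hF : ∀ x : ℝ, 0 < x → (∫ z in Ioo (0 : ℝ) x, (h z - c) * w z)
      = ∫ z in (0 : ℝ)..x, (h z - c) * w z := by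
    intro x hx
    rw [intervalIntegral.integral_of_le hx.le, integral_Ioc_eq_integral_Ioo]
  -- points where `h` is below / above `c`
  obtain ⟨s, hs0, hsc⟩ : ∃ s : ℝ, 0 < s ∧ h s < c := by
    have h1 := (hh0.eventually (gt_mem_nhds hc)).and self_mem_nhdsWithin
    obtain ⟨s, h2, h3⟩ := h1.exists
    exact ⟨s, h3, h2⟩
  obtain ⟨B, hsB, hBc⟩ : ∃ B : ℝ, s < B ∧ c < h B := by
    have h1 : ∀ᶠ x in atTop, c < h x := by
      rcases hhlim with h1 | ⟨L, h1, h2⟩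
      · exact h1.eventually_gt_atTop c
      · exact h1.eventually (lt_mem_nhds h2)
    obtain ⟨B, h2, h3⟩ := (h1.and (eventually_gt_atTop s)).exists
    exact ⟨B, h3, h2⟩
  obtain ⟨a, ha, hac⟩ : ∃ a ∈ Icc s B, h a = c := by
    have := intermediate_value_Icc hsB.le
      (hhc.mono (fun x hx => lt_of_lt_of_le hs0 hx.1))
    exact this ⟨hsc.le, hBc.le⟩
  have ha0 : 0 < a := lt_of_lt_of_le hs0 ha.1
  have hB0 : 0 < B := hs0.trans hsB
  have hneg : ∀ x : ℝ, 0 < x → x ≤ a → ∫ z in (0 : ℝ)..x, (h z - c) * w z < 0 := by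
    intro x hx hxa
    have h1 : 0 < ∫ z in (0 : ℝ)..x, -((h z - c) * w z) := by
      refine intervalIntegral.intervalIntegral_pos_of_pos_on (hfI 0 x le_rfl hx.le).neg ?_ hx
      intro z hz
      have h2 := hhmono hz.1 ha0 (hz.2.trans_le hxa)
      have h3 := mul_pos (show 0 < c - h z by linarith) (hwpos z hz.1)
      linarith
    rw [intervalIntegral.integral_neg] at h1
    linarith
  have hmono : ∀ x y : ℝ, a ≤ x → x < y → ∫ z in (0 : ℝ)..x, (h z - c) * w z
      < ∫ z in (0 : ℝ)..y, (h z - c) * w z := by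
    intro x y hx hxy
    have hx0 : 0 ≤ x := ha0.le.trans hx
    rw [← intervalIntegral.integral_add_adjacent_intervals (hfI 0 x le_rfl hx0)
      (hfI x y hx0 hxy.le)]
    have h1 : 0 < ∫ z in x..y, (h z - c) * w z := by
      refine intervalIntegral.intervalIntegral_pos_of_pos_on (hfI x y hx0 hxy.le) ?_ hxy
      intro z hz
      have hz0 : 0 < z := lt_of_le_of_lt hx0 hz.1
      have h2 := hhmono ha0 hz0 (lt_of_le_of_lt hx hz.1)
      exact mul_pos (by linarith) (hwpos z hz0)
    linarith
  have hunb : ∀ M : ℝ, ∃ x : ℝ, B ≤ x ∧ M < ∫ z in (0 : ℝ)..x, w z := by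
    by_contra hcon
    push Not at hcon
    obtain ⟨M, hM⟩ := hcon
    have hint : IntegrableOn w (Ioi 0) := by
      refine integrableOn_Ioi_of_intervalIntegral_norm_bounded (l := atTop) (b := id) M 0 ?_
        tendsto_id ?_
      · intro x
        rcases le_or_gt x 0 with hx | hx
        · simp [hx]
        · exact (intervalIntegrable_iff_integrableOn_Ioc_of_le hx.le).1 (hwI 0 x le_rfl hx.le)
      · filter_upwards [eventually_ge_atTop B] with x hx
        refine le_trans (le_of_eq ?_) (hM x hx)
        simp only [id]
        rw [intervalIntegral.integral_of_le (hB0.le.trans hx),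
          intervalIntegral.integral_of_le (hB0.le.trans hx)]
        refine setIntegral_congr_fun measurableSet_Ioc ?_
        intro z hz
        exact Real.norm_of_nonneg (hwpos z hz.1).le
    exact hint.lintegral_lt_top.ne hwinf
  obtain ⟨X, hBX, hXpos⟩ : ∃ X : ℝ, B ≤ X ∧ 0 ≤ ∫ z in (0 : ℝ)..X, (h z - c) * w z := by
    have hd : 0 < h B - c := by linarith
    obtain ⟨X, hBX, hX⟩ := hunb ((∫ z in (0 : ℝ)..B, w z)
      - (∫ z in (0 : ℝ)..B, (h z - c) * w z) / (h B - c))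
    refine ⟨X, hBX, ?_⟩
    rw [← intervalIntegral.integral_add_adjacent_intervals (hwI 0 B le_rfl hB0.le)
      (hwI B X hB0.le hBX)] at hX
    rw [← intervalIntegral.integral_add_adjacent_intervals (hfI 0 B le_rfl hB0.le)
      (hfI B X hB0.le hBX)]
    have h1 : (h B - c) * ∫ z in B..X, w z ≤ ∫ z in B..X, (h z - c) * w z := by
      rw [← intervalIntegral.integral_const_mul]
      refine intervalIntegral.integral_mono_on hBX ((hwI B X hB0.le hBX).const_mul _)
        (hfI B X hB0.le hBX) ?_
      intro z hz
      have hz0 : 0 < z := lt_of_lt_of_le hB0 hz.1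
      have h2 := hhmono.monotoneOn hB0 hz0 hz.1
      exact mul_le_mul_of_nonneg_right (by linarith) (hwpos z hz0).le
    have h3 : -((∫ z in (0 : ℝ)..B, (h z - c) * w z) / (h B - c)) < ∫ z in B..X, w z := by
      linarith
    have h4 := mul_lt_mul_of_pos_left h3 hd
    rw [mul_neg, mul_div_cancel₀ _ hd.ne'] at h4
    linarith
  have haX : a ≤ X := ha.2.trans hBX
  have hX0 : 0 ≤ X := ha0.le.trans haX
  have hcont : ContinuousOn (fun x => ∫ z in (0 : ℝ)..x, (h z - c) * w z) (Icc a X) := by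
    have h1 := intervalIntegral.continuousOn_primitive_interval'
      (hfI 0 X le_rfl hX0) (a := 0) left_mem_uIcc
    refine h1.mono ?_
    rw [uIcc_of_le hX0]
    exact Icc_subset_Icc_left ha0.le
  obtain ⟨xs, hxs, hxs0⟩ := intermediate_value_Icc haX hcont ⟨(hneg a ha0 le_rfl).le, hXpos⟩
  simp only at hxs0
  have haxs : a < xs := by
    refine lt_of_le_of_ne hxs.1 ?_
    rintro rfl
    exact (hneg a ha0 le_rfl).ne hxs0
  have hxspos : 0 < xs := ha0.trans haxs
  refine ⟨xs, ⟨hxspos, ?_, ?_⟩, ?_⟩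
  · rw [hF xs hxspos, hxs0]
  · rw [← hac]
    exact hhmono ha0 hxspos haxs
  · intro y hy hy0
    rw [hF y hy] at hy0
    have hay : a < y := by
      by_contra hcon
      exact (hneg y hy (not_lt.1 hcon)).ne hy0
    rcases lt_trichotomy y xs with hlt | heq | hgt
    · have := hmono y xs hay.le hlt
      linarith
    · exact heq
    · have := hmono xs y haxs.le hgt
      linarith
end

section
/- (Explicit optimal entry threshold for the square-root payoff under geometric Brownian motion.) Let α, β, r, λ > 0 and K, C ≥ 0 with K + C > 0. Set ρ = r + λ, a = a(ρ), b = b(ρ), and c = K + C/(r+λ). Then x* = [ (1/2 − a) · (1/2)·β²·b·c ]² is a positive real number satisfying (2/β²)·∫₀^{x*} z^{−(a+1)}·√z dz = c·b·(x*)^{b + 2α/β² − 1}, i.e. x* solves the optimal-threshold equation for the payoff h(x) = √x. -/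
open Set Real MeasureTheory

/-- (Explicit optimal entry threshold for the square-root payoff under
geometric Brownian motion.) With `ρ = r + λ`, `a = a(ρ)`, `b = b(ρ)` and
`c = K + C/(r+λ)`, the number `x* = [(1/2 − a)·(1/2)·β²·b·c]²` is positive and satisfies
`(2/β²)·∫₀^{x*} z^(−(a+1))·√z dz = c·b·(x*)^(b + 2α/β² − 1)`, i.e. it solves the
optimal-threshold equation for the payoff `h(x) = √x`. -/
theorem gbm_sqrt_payoff_threshold
    (α β r lam K C : ℝ) (hα : 0 < α) (hβ : 0 < β) (hr : 0 < r) (hlam : 0 < lam)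
    (hK : 0 ≤ K) (hC : 0 ≤ C) (hKC : 0 < K + C)
    (ρ b a c xs : ℝ)
    (hρ : ρ = r + lam)
    (hb : b = (1 / 2 - α / β ^ 2) + Real.sqrt ((1 / 2 - α / β ^ 2) ^ 2 + 2 * ρ / β ^ 2))
    (ha : a = (1 / 2 - α / β ^ 2) - Real.sqrt ((1 / 2 - α / β ^ 2) ^ 2 + 2 * ρ / β ^ 2))
    (hc : c = K + C / (r + lam))
    (hxs : xs = ((1 / 2 - a) * ((1 / 2) * β ^ 2 * b * c)) ^ 2) :
    0 < xs ∧
    (2 / β ^ 2) * ∫ z in Ioo (0 : ℝ) xs, z ^ (-(a + 1)) * Real.sqrt z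
      = c * b * xs ^ (b + 2 * α / β ^ 2 - 1) := by
  have hβ2 : 0 < β ^ 2 := by positivity
  have hρ0 : 0 < ρ := by rw [hρ]; positivity
  set m := 1 / 2 - α / β ^ 2 with hm
  have hq : 0 < 2 * ρ / β ^ 2 := by positivity
  have hlt : |m| < Real.sqrt (m ^ 2 + 2 * ρ / β ^ 2) := by
    rw [← Real.sqrt_sq_eq_abs]
    exact Real.sqrt_lt_sqrt (sq_nonneg m) (by linarith)
  have ha0 : a < 0 := by have := le_abs_self m; linarith
  have hb0 : 0 < b := by have := neg_abs_le m; linarith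
  have hc0 : 0 < c := by
    rw [hc]
    rcases hK.lt_or_eq with h | h
    · positivity
    · have : 0 < C := by linarith
      positivity
  have hd : 0 < 1 / 2 - a := by linarith
  have hy : 0 < (1 / 2 - a) * ((1 / 2) * β ^ 2 * b * c) := by positivity
  have hx : 0 < xs := by rw [hxs]; positivity
  refine ⟨hx, ?_⟩
  have hexp : b + 2 * α / β ^ 2 - 1 = -a := by
    have : 2 * α / β ^ 2 = 2 * (α / β ^ 2) := by ring
    rw [this]; linarith
  have hint : ∫ z in Ioo (0 : ℝ) xs, z ^ (-(a + 1)) * Real.sqrt z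
      = xs ^ (1 / 2 - a) / (1 / 2 - a) := by
    have h1 : ∫ z in Ioo (0 : ℝ) xs, z ^ (-(a + 1)) * Real.sqrt z
        = ∫ z in Ioo (0 : ℝ) xs, z ^ (-a - 1 / 2) := by
      refine setIntegral_congr_fun measurableSet_Ioo fun z hz => ?_
      rw [Real.sqrt_eq_rpow, ← Real.rpow_add hz.1]
      congr 1; ring
    rw [h1, ← integral_Ioc_eq_integral_Ioo, ← intervalIntegral.integral_of_le hx.le,
      integral_rpow (Or.inl (by linarith))]
    have h2 : -a - 1 / 2 + 1 = 1 / 2 - a := by ring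
    rw [h2, Real.zero_rpow hd.ne', sub_zero]
  have hs : xs ^ (1 / 2 - a) = (1 / 2 - a) * ((1 / 2) * β ^ 2 * b * c) * xs ^ (-a) := by
    rw [sub_eq_add_neg, Real.rpow_add hx, ← Real.sqrt_eq_rpow]
    congr 1
    rw [hxs, Real.sqrt_sq hy.le, sub_eq_add_neg]
  rw [hint, hexp, hs]
  have := hd.ne'
  generalize 1 / 2 - a = d at *
  field_simp
end
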